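/- The distribution of √n(β̃ − β) under P_{n,β,σ} equals the distribution of B_n√n β₂ + C_n√n Z₁ + [1 + exp(2αk₂) exp(−α‖Z₂ + (X₂'(I−P_R)X₂)^{1/2}β₂‖²/σ²)]⁻¹ · (D_n√n Z₂ − B_n√n β₂), where Z₁ ~ N(0, σ²I_{k₁}) and Z₂ ~ N(0, σ²I_{k₂}) are independent. -/

import Mathlib

open MeasureTheory Matrix Real Filter Topology ENNReal NNReal

noncomputable section

/-- Euclidean norm of a finite tuple. -/
def enorm2 {ι : Type*} [Fintype ι] (v : ι → ℝ) : ℝ := Real.sqrt (∑ i, v i ^ 2)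

/-- The `N(0, σ² I)` distribution on `ι → ℝ`, given by its Lebesgue density. -/
def gaussPi (ι : Type*) [Fintype ι] (σ2 : ℝ) : Measure (ι → ℝ) :=
  volume.withDensity fun x => ENNReal.ofReal
    ((2 * π * σ2) ^ (-(Fintype.card ι : ℝ) / 2) * Real.exp (-(enorm2 x) ^ 2 / (2 * σ2)))

/-- The Lebesgue density of the `N(0, σ² Q⁻¹)` distribution on `ι → ℝ`
(for `Q` symmetric positive definite). -/
def gaussCovDens {ι : Type*} [Fintype ι] [DecidableEq ι] (σ2 : ℝ) (Q : Matrix ι ι ℝ)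
    (x : ι → ℝ) : ℝ :=
  (2 * π * σ2) ^ (-(Fintype.card ι : ℝ) / 2) * Real.sqrt Q.det *
    Real.exp (-(x ⬝ᵥ Q.mulVec x) / (2 * σ2))

/-- The `N(0, σ² Q⁻¹)` distribution on `ι → ℝ` (for `Q` symmetric positive definite),
given by its Lebesgue density. -/
def gaussCov {ι : Type*} [Fintype ι] [DecidableEq ι] (σ2 : ℝ) (Q : Matrix ι ι ℝ) :
    Measure (ι → ℝ) :=
  volume.withDensity fun x => ENNReal.ofReal (gaussCovDens σ2 Q x)

open scoped ComplexOrder in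
/-- The positive semidefinite square root of a positive semidefinite matrix
(Mathlib's former `Matrix.PosSemidef.sqrt`). -/
def Matrix.PosSemidef.sqrt {m 𝕜 : Type*} [Fintype m] [RCLike 𝕜] [DecidableEq m]
    {A : Matrix m m 𝕜} (hA : A.PosSemidef) : Matrix m m 𝕜 :=
  hA.1.eigenvectorUnitary.1 * diagonal ((↑) ∘ Real.sqrt ∘ hA.1.eigenvalues) *
    (star hA.1.eigenvectorUnitary : Matrix m m 𝕜)

open Classical in
/-- Symmetric positive semidefinite square root (junk value `0` off the psd cone). -/
def msqrt {ι : Type*} [Fintype ι] [DecidableEq ι] (A : Matrix ι ι ℝ) : Matrix ι ι ℝ :=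
  if h : A.PosSemidef then h.sqrt else 0

open Classical in
/-- Smallest eigenvalue of a symmetric matrix (junk value `0` otherwise). -/
def lamMin {ι : Type*} [Fintype ι] [DecidableEq ι] (A : Matrix ι ι ℝ) : ℝ :=
  if h : A.IsHermitian then ⨅ i, h.eigenvalues i else 0

open Classical in
/-- Largest eigenvalue of a symmetric matrix (junk value `0` otherwise). -/
def lamMax {ι : Type*} [Fintype ι] [DecidableEq ι] (A : Matrix ι ι ℝ) : ℝ :=
  if h : A.IsHermitian then ⨆ i, h.eigenvalues i else 0

variable {n k₁ k₂ : ℕ}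

/-- First block of columns of the design matrix. -/
def X1 (X : Matrix (Fin n) (Fin k₁ ⊕ Fin k₂) ℝ) : Matrix (Fin n) (Fin k₁) ℝ :=
  X.submatrix id Sum.inl

/-- Second block of columns of the design matrix. -/
def X2 (X : Matrix (Fin n) (Fin k₁ ⊕ Fin k₂) ℝ) : Matrix (Fin n) (Fin k₂) ℝ :=
  X.submatrix id Sum.inr

/-- Unrestricted least squares estimator. -/
def betaU (X : Matrix (Fin n) (Fin k₁ ⊕ Fin k₂) ℝ) (Y : Fin n → ℝ) : (Fin k₁ ⊕ Fin k₂) → ℝ :=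
  (Xᵀ * X)⁻¹.mulVec (Xᵀ.mulVec Y)

/-- Restricted least squares estimator. -/
def betaR (X : Matrix (Fin n) (Fin k₁ ⊕ Fin k₂) ℝ) (Y : Fin n → ℝ) : (Fin k₁ ⊕ Fin k₂) → ℝ :=
  Sum.elim (((X1 X)ᵀ * X1 X)⁻¹.mulVec ((X1 X)ᵀ.mulVec Y)) (fun _ => 0)

/-- Risk estimate of the restricted model. -/
def rR (X : Matrix (Fin n) (Fin k₁ ⊕ Fin k₂) ℝ) (σ2 : ℝ) (Y : Fin n → ℝ) : ℝ :=
  Y ⬝ᵥ Y - betaR X Y ⬝ᵥ (Xᵀ * X).mulVec (betaR X Y) + σ2 * (2 * k₁ - n)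

/-- Risk estimate of the unrestricted model. -/
def rU (X : Matrix (Fin n) (Fin k₁ ⊕ Fin k₂) ℝ) (σ2 : ℝ) (Y : Fin n → ℝ) : ℝ :=
  Y ⬝ᵥ Y - betaU X Y ⬝ᵥ (Xᵀ * X).mulVec (betaU X Y) + σ2 * (2 * (k₁ + k₂) - n)

/-- The model averaging weight `λ̂`. -/
def lamHat (α σ2 : ℝ) (X : Matrix (Fin n) (Fin k₁ ⊕ Fin k₂) ℝ) (Y : Fin n → ℝ) : ℝ :=
  Real.exp (-(α * rR X σ2 Y) / σ2) /
    (Real.exp (-(α * rR X σ2 Y) / σ2) + Real.exp (-(α * rU X σ2 Y) / σ2))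

/-- Leung and Barron's model averaging estimator `β̃`. -/
def mavg (α σ2 : ℝ) (X : Matrix (Fin n) (Fin k₁ ⊕ Fin k₂) ℝ) (Y : Fin n → ℝ) :
    (Fin k₁ ⊕ Fin k₂) → ℝ :=
  lamHat α σ2 X Y • betaR X Y + (1 - lamHat α σ2 X Y) • betaU X Y

/-- Projection on the column space of `X₁`. -/
def projR (X : Matrix (Fin n) (Fin k₁ ⊕ Fin k₂) ℝ) : Matrix (Fin n) (Fin n) ℝ :=
  X1 X * ((X1 X)ᵀ * X1 X)⁻¹ * (X1 X)ᵀ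

/-- Projection on the column space of `X`. -/
def projU (X : Matrix (Fin n) (Fin k₁ ⊕ Fin k₂) ℝ) : Matrix (Fin n) (Fin n) ℝ :=
  X * (Xᵀ * X)⁻¹ * Xᵀ

/-- The distribution `P_{n,β,σ}` of `Y = Xβ + u`, `u ~ N(0, σ² Iₙ)`. -/
def Pmeas (X : Matrix (Fin n) (Fin k₁ ⊕ Fin k₂) ℝ) (β : (Fin k₁ ⊕ Fin k₂) → ℝ) (σ2 : ℝ) :
    Measure (Fin n → ℝ) :=
  (gaussPi (Fin n) σ2).map (fun u => X.mulVec β + u)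

/-- The function `h_{a,b}(ξ) = ξ / (1 + a exp(−ξ²/b))`. -/
def hfun (a b ξ : ℝ) : ℝ := ξ / (1 + a * Real.exp (-ξ ^ 2 / b))

/-- The inverse `g_{a,b}` of `h_{a,b}`. -/
def gfun (a b : ℝ) : ℝ → ℝ := Function.invFun (hfun a b)

open Classical in
/-- `g(‖w‖) w / ‖w‖`, with the convention that this is `0` for `w = 0`. -/
def gdir (a b : ℝ) {ι : Type*} [Fintype ι] (w : ι → ℝ) : ι → ℝ :=
  if w = 0 then 0 else (gfun a b (enorm2 w) / enorm2 w) • w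


/-- The finite-sample density `f_{n,β,σ}` of `√n(β̃ − β)` (Theorem 3 of the paper). -/
def fdens {n k₁ k₂ : ℕ} (X : Matrix (Fin n) (Fin k₁ ⊕ Fin k₂) ℝ)
    (β : (Fin k₁ ⊕ Fin k₂) → ℝ) (σ2 α : ℝ) (t : (Fin k₁ ⊕ Fin k₂) → ℝ) : ℝ :=
  let a := Real.exp (2 * α * k₂)
  let b := σ2 / α
  let S := (X2 X)ᵀ * (1 - projR X) * X2 X
  let w := (Real.sqrt n)⁻¹ • (msqrt S).mulVec ((t ∘ Sum.inr) + Real.sqrt n • (β ∘ Sum.inr))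
  (2 * π * σ2) ^ (-((k₁ : ℝ) + k₂) / 2) * Real.sqrt (((n : ℝ)⁻¹ • (Xᵀ * X)).det) *
    Real.exp (-(enorm2 ((Real.sqrt n)⁻¹ •
        ((msqrt ((X1 X)ᵀ * X1 X)).mulVec (t ∘ Sum.inl) +
          ((msqrt ((X1 X)ᵀ * X1 X))⁻¹ * (X1 X)ᵀ * X2 X).mulVec (t ∘ Sum.inr)))) ^ 2 /
      (2 * σ2)) *
    (1 + Real.exp (-(α / σ2) * gfun a b (enorm2 w) ^ 2 + 2 * α * k₂)) ^ (k₂ : ℕ) *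
    (1 + (2 * α / σ2) * gfun a b (enorm2 w) ^ 2 *
        (1 + Real.exp ((α / σ2) * gfun a b (enorm2 w) ^ 2 - 2 * α * k₂))⁻¹)⁻¹ *
    Real.exp (-(enorm2 (gdir a b w - (msqrt S).mulVec (β ∘ Sum.inr))) ^ 2 / (2 * σ2))

/-- The density `f_{∞,γ}` of the limiting distribution (formula (13) of the paper),
stated for a general symmetric positive definite matrix in place of `Q`. -/
def fInfty {k₁ k₂ : ℕ} (Q : Matrix (Fin k₁ ⊕ Fin k₂) (Fin k₁ ⊕ Fin k₂) ℝ) (σ2 α : ℝ)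
    (γ : Fin k₂ → ℝ) (t : (Fin k₁ ⊕ Fin k₂) → ℝ) : ℝ :=
  let a := Real.exp (2 * α * k₂)
  let b := σ2 / α
  let S := Q.toBlocks₂₂ - Q.toBlocks₂₁ * Q.toBlocks₁₁⁻¹ * Q.toBlocks₁₂
  let w := (msqrt S).mulVec ((t ∘ Sum.inr) + γ)
  (2 * π * σ2) ^ (-((k₁ : ℝ) + k₂) / 2) * Real.sqrt Q.det *
    Real.exp (-(enorm2 ((msqrt Q.toBlocks₁₁).mulVec (t ∘ Sum.inl) +
        ((msqrt Q.toBlocks₁₁)⁻¹ * Q.toBlocks₁₂).mulVec (t ∘ Sum.inr))) ^ 2 / (2 * σ2)) *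
    (1 + Real.exp (-(α / σ2) * gfun a b (enorm2 w) ^ 2 + 2 * α * k₂)) ^ (k₂ : ℕ) *
    (1 + (2 * α / σ2) * gfun a b (enorm2 w) ^ 2 *
        (1 + Real.exp ((α / σ2) * gfun a b (enorm2 w) ^ 2 - 2 * α * k₂))⁻¹)⁻¹ *
    Real.exp (-(enorm2 (gdir a b w - (msqrt S).mulVec γ)) ^ 2 / (2 * σ2))


/-!
Whitening `X₁` and the residuals of `X₂` on `X₁` gives a matrix with orthonormal rows, hence two
scores of `Y`, in which everything is explicit: both least squares estimators are linear, and the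
risk estimates differ by the squared norm of the second score minus `2σ²k₂`, because `[C_n : D_n]`
is an isometry from the scores onto the coefficients with quadratic form `X'X`. The averaging weight
therefore depends on the second score only. Orthonormal rows map `N(0, σ²I)` to `N(0, σ²I)`, so the
scores of the error are independent and may serve as `Z₁` and `Z₂`.
-/

section Gaussian

variable {ι κ : Type*} [Fintype ι] [Fintype κ] {v : ℝ}

lemma enorm2_sq (x : ι → ℝ) : enorm2 x ^ 2 = x ⬝ᵥ x := by
  rw [enorm2, Real.sq_sqrt (Finset.sum_nonneg fun i _ => sq_nonneg (x i))]
  simp only [dotProduct, sq]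

lemma continuous_enorm2 : Continuous (enorm2 : (ι → ℝ) → ℝ) := by
  unfold enorm2
  fun_prop

lemma gaussPi_density_eq_prod (hv : 0 < v) (x : ι → ℝ) :
    (2 * π * v) ^ (-(Fintype.card ι : ℝ) / 2) * Real.exp (-(enorm2 x) ^ 2 / (2 * v)) =
      ∏ i, ProbabilityTheory.gaussianPDFReal 0 v.toNNReal (x i) := by
  have h2πv : 0 < 2 * π * v := by positivity
  simp only [ProbabilityTheory.gaussianPDFReal_def, Real.coe_toNNReal v hv.le, sub_zero]
  rw [Finset.prod_mul_distrib, ← Real.exp_sum, ← Finset.sum_div, Finset.sum_neg_distrib,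
    Finset.prod_const, Finset.card_univ, Real.sqrt_eq_rpow, ← Real.rpow_neg h2πv.le,
    ← Real.rpow_mul_natCast h2πv.le, enorm2_sq]
  simp only [dotProduct, ← sq]
  ring_nf

lemma gaussPi_eq_pi_gaussianReal (hv : 0 < v) :
    gaussPi ι v = Measure.pi fun _ : ι => ProbabilityTheory.gaussianReal 0 v.toNNReal := by
  refine (Measure.pi_eq fun s hs => ?_).symm
  simp_rw [gaussPi, gaussPi_density_eq_prod hv]
  rw [withDensity_apply _ (MeasurableSet.univ_pi hs), volume_pi, Measure.restrict_pi_pi,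
    ← ofReal_integral_eq_lintegral_ofReal, integral_fintype_prod_eq_prod,
    ENNReal.ofReal_prod_of_nonneg]
  · simp only [ProbabilityTheory.gaussianReal_apply_eq_integral _ (Real.toNNReal_pos.2 hv).ne']
  · exact fun i _ => integral_nonneg fun x => ProbabilityTheory.gaussianPDFReal_nonneg _ _ _
  · exact Integrable.fintype_prod fun i =>
      (ProbabilityTheory.integrable_gaussianPDFReal _ _).restrict
  · exact ae_of_all _ fun x => Finset.prod_nonneg fun i _ =>
      ProbabilityTheory.gaussianPDFReal_nonneg _ _ _

lemma isProbabilityMeasure_gaussPi (hv : 0 < v) : IsProbabilityMeasure (gaussPi ι v) := by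
  rw [gaussPi_eq_pi_gaussianReal hv]
  infer_instance

lemma charFun_gaussPi (hv : 0 < v) (t : EuclideanSpace ℝ ι) :
    charFun ((gaussPi ι v).map (WithLp.toLp 2)) t =
      Complex.exp (-(v * (t.ofLp ⬝ᵥ t.ofLp : ℝ)) / 2) := by
  rw [gaussPi_eq_pi_gaussianReal hv, charFun_pi]
  simp only [ProbabilityTheory.charFun_gaussianReal, ← Complex.exp_sum, dotProduct,
    Real.coe_toNNReal v hv.le]
  congr 1
  push_cast
  rw [Finset.mul_sum, ← Finset.sum_neg_distrib, Finset.sum_div]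
  exact Finset.sum_congr rfl fun i _ => by ring

lemma charFun_map_mulVec (μ : Measure (κ → ℝ)) (T : Matrix ι κ ℝ) (t : EuclideanSpace ℝ ι) :
    charFun ((μ.map T.mulVec).map (WithLp.toLp 2)) t =
      charFun (μ.map (WithLp.toLp 2)) (WithLp.toLp 2 (Tᵀ *ᵥ t.ofLp)) := by
  have hT : Measurable T.mulVec := Continuous.measurable (by fun_prop)
  simp_rw [charFun_apply, ← MeasurableEquiv.coe_toLp, integral_map_equiv, MeasurableEquiv.coe_toLp]
  rw [integral_map hT.aemeasurable (Continuous.aestronglyMeasurable (by fun_prop))]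
  simp [EuclideanSpace.inner_eq_star_dotProduct, dotProduct_mulVec, mulVec_transpose]

lemma map_mulVec_gaussPi [DecidableEq ι] (hv : 0 < v) {T : Matrix ι κ ℝ} (hT : T * Tᵀ = 1) :
    (gaussPi κ v).map T.mulVec = gaussPi ι v := by
  have := isProbabilityMeasure_gaussPi (ι := ι) hv
  have := isProbabilityMeasure_gaussPi (ι := κ) hv
  refine (MeasurableEquiv.toLp 2 (ι → ℝ)).map_measurableEquiv_injective
    (Measure.ext_of_charFun (E := EuclideanSpace ℝ ι) (funext fun t => ?_))
  have hnorm : (Tᵀ *ᵥ t.ofLp) ⬝ᵥ (Tᵀ *ᵥ t.ofLp) = t.ofLp ⬝ᵥ t.ofLp := by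
    rw [dotProduct_mulVec, vecMul_transpose, mulVec_mulVec, hT, one_mulVec]
  rw [MeasurableEquiv.coe_toLp, charFun_map_mulVec, charFun_gaussPi hv, charFun_gaussPi hv, hnorm]

lemma map_gaussPi_sum (hv : 0 < v) :
    (gaussPi (ι ⊕ κ) v).map (MeasurableEquiv.sumPiEquivProdPi fun _ => ℝ) =
      (gaussPi ι v).prod (gaussPi κ v) := by
  simp only [gaussPi_eq_pi_gaussianReal hv]
  exact (measurePreserving_sumPiEquivProdPi _).map_eq

lemma map_mulVec_pair_gaussPi {ν : Type*} [Fintype ν] [DecidableEq ι] [DecidableEq κ] (hv : 0 < v)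
    {T₁ : Matrix ι ν ℝ} {T₂ : Matrix κ ν ℝ} (hT : fromRows T₁ T₂ * (fromRows T₁ T₂)ᵀ = 1) :
    (gaussPi ν v).map (fun u => (T₁ *ᵥ u, T₂ *ᵥ u)) = (gaussPi ι v).prod (gaussPi κ v) := by
  rw [← map_gaussPi_sum hv, ← map_mulVec_gaussPi hv hT, Measure.map_map
    (MeasurableEquiv.measurable _) (Continuous.measurable (by fun_prop))]
  rfl

end Gaussian

section LeastSquares

variable {m p q : Type*} [Fintype p]

lemma mulVec_injective_of_rank_eq_card {A : Matrix m p ℝ} (hA : A.rank = Fintype.card p) :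
    Function.Injective A.mulVec := by
  rw [mulVec_injective_iff, linearIndependent_iff_card_eq_finrank_span, ← hA,
    rank_eq_finrank_span_cols]
  rfl

lemma mulVec_injective_of_fromCols [Fintype q] {A : Matrix m p ℝ} {B : Matrix m q ℝ}
    (hAB : Function.Injective (fromCols A B).mulVec) : Function.Injective A.mulVec := by
  intro x y hxy
  have hcols : fromCols A B *ᵥ Sum.elim x 0 = fromCols A B *ᵥ Sum.elim y 0 := by
    simpa [fromCols_mulVec_sumElim] using hxy
  exact (Sum.elim_eq_iff.1 (hAB hcols)).1

variable [Fintype m]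

lemma posDef_transpose_mul_self {A : Matrix m p ℝ} (hA : Function.Injective A.mulVec) :
    (Aᵀ * A).PosDef := by
  simpa only [conjTranspose_eq_transpose_of_trivial] using PosDef.conjTranspose_mul_self A hA

variable [DecidableEq p]

lemma isUnit_det_transpose_mul_self {A : Matrix m p ℝ} (hA : Function.Injective A.mulVec) :
    IsUnit (Aᵀ * A).det :=
  (isUnit_iff_isUnit_det _).1 (posDef_transpose_mul_self hA).isUnit

lemma msqrt_eq_cfc {S : Matrix p p ℝ} (hS : S.PosSemidef) : msqrt S = cfc Real.sqrt S := by
  rw [msqrt, dif_pos hS, hS.1.cfc_eq]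
  rfl

lemma transpose_msqrt (S : Matrix p p ℝ) : (msqrt S)ᵀ = msqrt S := by
  by_cases hS : S.PosSemidef
  · rw [msqrt_eq_cfc hS]
    exact cfc_predicate Real.sqrt S
  · simp [msqrt, hS]

lemma msqrt_mul_self {S : Matrix p p ℝ} (hS : S.PosSemidef) : msqrt S * msqrt S = S := by
  have hsqrt : (spectrum ℝ S).EqOn (fun x => Real.sqrt x * Real.sqrt x) id := by
    rw [hS.1.spectrum_real_eq_range_eigenvalues]
    rintro _ ⟨i, rfl⟩
    exact Real.mul_self_sqrt (hS.eigenvalues_nonneg i)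
  rw [msqrt_eq_cfc hS, ← cfc_mul Real.sqrt Real.sqrt S, cfc_congr hsqrt,
    cfc_id ℝ S hS.1.isSelfAdjoint]

lemma isUnit_msqrt {S : Matrix p p ℝ} (hS : S.PosDef) : IsUnit (msqrt S) := by
  have hunit : IsUnit (msqrt S * msqrt S) := by
    rw [msqrt_mul_self hS.posSemidef]
    exact hS.isUnit
  exact ((Commute.refl _).isUnit_mul_iff.1 hunit).1

lemma isUnit_det_msqrt_transpose_mul_self {W : Matrix m p ℝ} (hW : Function.Injective W.mulVec) :
    IsUnit (msqrt (Wᵀ * W)).det :=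
  (isUnit_iff_isUnit_det _).1 (isUnit_msqrt (posDef_transpose_mul_self hW))

/-- The whitening matrix `(WᵀW)^{-1/2} Wᵀ`; when `W` has full column rank its rows form an
orthonormal basis of the column space of `W`. -/
def whiten (W : Matrix m p ℝ) : Matrix p m ℝ := (msqrt (Wᵀ * W))⁻¹ * Wᵀ

lemma transpose_whiten (W : Matrix m p ℝ) : (whiten W)ᵀ = W * (msqrt (Wᵀ * W))⁻¹ := by
  rw [whiten, transpose_mul, transpose_transpose, transpose_nonsing_inv, transpose_msqrt]

lemma whiten_mul_self {W : Matrix m p ℝ} (hW : Function.Injective W.mulVec) :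
    whiten W * W = msqrt (Wᵀ * W) := by
  rw [whiten, Matrix.mul_assoc]
  nth_rw 2 [← msqrt_mul_self (posDef_transpose_mul_self hW).posSemidef]
  exact nonsing_inv_mul_cancel_left _ _ (isUnit_det_msqrt_transpose_mul_self hW)

lemma whiten_mul_transpose_whiten {W : Matrix m p ℝ} (hW : Function.Injective W.mulVec) :
    whiten W * (whiten W)ᵀ = 1 := by
  rw [transpose_whiten, ← Matrix.mul_assoc, whiten_mul_self hW,
    mul_nonsing_inv _ (isUnit_det_msqrt_transpose_mul_self hW)]

lemma msqrt_inv_mul_whiten {W : Matrix m p ℝ} (hW : Function.Injective W.mulVec) :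
    (msqrt (Wᵀ * W))⁻¹ * whiten W = (Wᵀ * W)⁻¹ * Wᵀ := by
  rw [whiten, ← Matrix.mul_assoc, ← Matrix.mul_inv_rev,
    msqrt_mul_self (posDef_transpose_mul_self hW).posSemidef]

/-- The coefficients `(AᵀA)⁻¹AᵀB` of the least squares regression of the columns of `B` on those
of `A`. -/
def lsCoef (A : Matrix m p ℝ) (B : Matrix m q ℝ) : Matrix p q ℝ := (Aᵀ * A)⁻¹ * Aᵀ * B

/-- The residuals of the least squares regression of the columns of `B` on those of `A`. -/
def lsResidual (A : Matrix m p ℝ) (B : Matrix m q ℝ) : Matrix m q ℝ := B - A * lsCoef A B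

lemma transpose_mul_lsResidual {A : Matrix m p ℝ} (hA : Function.Injective A.mulVec)
    (B : Matrix m q ℝ) : Aᵀ * lsResidual A B = 0 := by
  rw [lsResidual, lsCoef, Matrix.mul_sub, ← Matrix.mul_assoc, Matrix.mul_assoc _ Aᵀ B,
    mul_nonsing_inv_cancel_left _ _ (isUnit_det_transpose_mul_self hA), sub_self]

lemma transpose_lsResidual_mul {A : Matrix m p ℝ} (hA : Function.Injective A.mulVec)
    (B : Matrix m q ℝ) : (lsResidual A B)ᵀ * A = 0 := by
  rw [← transpose_transpose ((lsResidual A B)ᵀ * A), transpose_mul, transpose_transpose,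
    transpose_mul_lsResidual hA, transpose_zero]

lemma transpose_lsResidual_mul_self [DecidableEq m] {A : Matrix m p ℝ}
    (hA : Function.Injective A.mulVec) (B : Matrix m q ℝ) :
    (lsResidual A B)ᵀ * lsResidual A B = Bᵀ * (1 - A * (Aᵀ * A)⁻¹ * Aᵀ) * B := by
  nth_rw 1 [lsResidual]
  rw [transpose_sub, transpose_mul, Matrix.sub_mul, Matrix.mul_assoc _ Aᵀ,
    transpose_mul_lsResidual hA, Matrix.mul_zero, sub_zero, lsResidual, lsCoef]
  simp only [Matrix.mul_sub, Matrix.sub_mul, Matrix.mul_one, Matrix.mul_assoc]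

lemma mulVec_injective_lsResidual [Fintype q] {A : Matrix m p ℝ} {B : Matrix m q ℝ}
    (hAB : Function.Injective (fromCols A B).mulVec) :
    Function.Injective (lsResidual A B).mulVec := by
  intro x y hxy
  have hcols : fromCols A B *ᵥ Sum.elim (-(lsCoef A B *ᵥ x)) x =
      fromCols A B *ᵥ Sum.elim (-(lsCoef A B *ᵥ y)) y := by
    simpa [lsResidual, fromCols_mulVec_sumElim, mulVec_neg, sub_mulVec, neg_add_eq_sub] using hxy
  exact (Sum.elim_eq_iff.1 (hAB hcols)).2

end LeastSquares

section Scores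

variable (X : Matrix (Fin n) (Fin k₁ ⊕ Fin k₂) ℝ)

/-- The Gram matrix `X₂'(I − P_R)X₂` of `X₂` after partialling out `X₁`. -/
def partialGram : Matrix (Fin k₂) (Fin k₂) ℝ := (X2 X)ᵀ * (1 - projR X) * X2 X

/-- The matrix `B_n`; `B_n β₂` is the bias of the restricted estimator. -/
def coefB : Matrix (Fin k₁ ⊕ Fin k₂) (Fin k₂) ℝ := fromRows (lsCoef (X1 X) (X2 X)) (-1)

/-- The matrix `C_n`, through which the score of `X₁` enters both estimators. -/
def coefC : Matrix (Fin k₁ ⊕ Fin k₂) (Fin k₁) ℝ := fromRows (msqrt ((X1 X)ᵀ * X1 X))⁻¹ 0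

/-- The matrix `D_n`, through which the score of `X₂` enters the unrestricted estimator. -/
def coefD : Matrix (Fin k₁ ⊕ Fin k₂) (Fin k₂) ℝ :=
  fromRows (-(lsCoef (X1 X) (X2 X) * (msqrt (partialGram X))⁻¹)) (msqrt (partialGram X))⁻¹

/-- The matrix `[C_n : D_n]`, a block triangular root of `(X'X)⁻¹`. -/
def coefCD : Matrix (Fin k₁ ⊕ Fin k₂) (Fin k₁ ⊕ Fin k₂) ℝ := fromCols (coefC X) (coefD X)

/-- The whitening matrix of `X₁`; it turns `Y` into the score of the restricted model. -/
def score₁ : Matrix (Fin k₁) (Fin n) ℝ := whiten (X1 X)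

/-- The whitening matrix of the residuals of `X₂` on `X₁`; it turns `Y` into the score of the
additional regressors. -/
def score₂ : Matrix (Fin k₂) (Fin n) ℝ := whiten (lsResidual (X1 X) (X2 X))

/-- The two whitening matrices stacked: the transposed orthogonal factor of a block QR
decomposition of `X`. -/
def score : Matrix (Fin k₁ ⊕ Fin k₂) (Fin n) ℝ := fromRows (score₁ X) (score₂ X)

lemma fromCols_X1_X2 : fromCols (X1 X) (X2 X) = X := fromCols_toCols X

lemma mul_coefC : X * coefC X = (score₁ X)ᵀ := by
  nth_rw 1 [← fromCols_X1_X2 X]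
  rw [coefC, fromCols_mul_fromRows, Matrix.mul_zero, add_zero, score₁, transpose_whiten]

variable {X} (hX : Function.Injective X.mulVec)
include hX

lemma mulVec_injective_X1 : Function.Injective (X1 X).mulVec :=
  mulVec_injective_of_fromCols (B := X2 X) (by rwa [fromCols_X1_X2])

lemma mulVec_injective_lsResidual_X1_X2 : Function.Injective (lsResidual (X1 X) (X2 X)).mulVec :=
  mulVec_injective_lsResidual (by rwa [fromCols_X1_X2])

lemma partialGram_eq :
    partialGram X = (lsResidual (X1 X) (X2 X))ᵀ * lsResidual (X1 X) (X2 X) :=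
  (transpose_lsResidual_mul_self (mulVec_injective_X1 hX) (X2 X)).symm

lemma mul_coefD : X * coefD X = (score₂ X)ᵀ := by
  nth_rw 1 [← fromCols_X1_X2 X]
  rw [coefD, fromCols_mul_fromRows, score₂, transpose_whiten, ← partialGram_eq hX, lsResidual,
    Matrix.mul_neg, ← Matrix.mul_assoc, neg_add_eq_sub, Matrix.sub_mul]

lemma mul_coefCD : X * coefCD X = (score X)ᵀ := by
  rw [coefCD, mul_fromCols, mul_coefC, mul_coefD hX, score, transpose_fromRows]

lemma score₁_mul_transpose_score₂ : score₁ X * (score₂ X)ᵀ = 0 := by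
  rw [score₁, whiten, score₂, transpose_whiten, Matrix.mul_assoc, ← Matrix.mul_assoc (X1 X)ᵀ,
    transpose_mul_lsResidual (mulVec_injective_X1 hX), Matrix.zero_mul, Matrix.mul_zero]

lemma score₂_mul_X1 : score₂ X * X1 X = 0 := by
  rw [score₂, whiten, Matrix.mul_assoc, transpose_lsResidual_mul (mulVec_injective_X1 hX),
    Matrix.mul_zero]

lemma score₂_mul_X2 : score₂ X * X2 X = msqrt (partialGram X) := by
  have hX2 : X2 X = lsResidual (X1 X) (X2 X) + X1 X * lsCoef (X1 X) (X2 X) :=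
    (sub_add_cancel _ _).symm
  rw [hX2, Matrix.mul_add, ← Matrix.mul_assoc, score₂_mul_X1 hX, Matrix.zero_mul, add_zero,
    score₂, whiten_mul_self (mulVec_injective_lsResidual_X1_X2 hX), partialGram_eq hX]

lemma score_mul_transpose_score : score X * (score X)ᵀ = 1 := by
  have hswap : score₂ X * (score₁ X)ᵀ = 0 := by
    rw [← transpose_transpose (score₂ X), ← transpose_mul, score₁_mul_transpose_score₂ hX,
      transpose_zero]
  rw [score, transpose_fromRows, fromRows_mul_fromCols, hswap, score₁_mul_transpose_score₂ hX,
    score₁, score₂, whiten_mul_transpose_whiten (mulVec_injective_X1 hX),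
    whiten_mul_transpose_whiten (mulVec_injective_lsResidual_X1_X2 hX), fromBlocks_one]

lemma coefCD_mul_score_mul_self : coefCD X * score X * X = 1 := by
  rw [Matrix.mul_assoc, mul_eq_one_comm, Matrix.mul_assoc, mul_coefCD hX,
    score_mul_transpose_score hX]

lemma inv_gram_eq : (Xᵀ * X)⁻¹ = coefCD X * (coefCD X)ᵀ := by
  refine inv_eq_left_inv ?_
  rw [Matrix.mul_assoc, ← Matrix.mul_assoc _ Xᵀ, ← transpose_mul, mul_coefCD hX,
    transpose_transpose, ← Matrix.mul_assoc, coefCD_mul_score_mul_self hX]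

lemma transpose_coefCD_mul_gram_mul_coefCD : (coefCD X)ᵀ * (Xᵀ * X) * coefCD X = 1 := by
  rw [← Matrix.mul_assoc, ← transpose_mul, Matrix.mul_assoc, mul_coefCD hX, transpose_transpose,
    score_mul_transpose_score hX]

lemma betaU_eq (Y : Fin n → ℝ) :
    betaU X Y = coefC X *ᵥ (score₁ X *ᵥ Y) + coefD X *ᵥ (score₂ X *ᵥ Y) := by
  rw [betaU, inv_gram_eq hX, mulVec_mulVec, Matrix.mul_assoc, ← transpose_mul, mul_coefCD hX,
    transpose_transpose, coefCD, score, fromCols_mul_fromRows, add_mulVec, mulVec_mulVec,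
    mulVec_mulVec]

lemma betaR_eq (Y : Fin n → ℝ) : betaR X Y = coefC X *ᵥ (score₁ X *ᵥ Y) := by
  rw [coefC, fromRows_mulVec, zero_mulVec, mulVec_mulVec, score₁,
    msqrt_inv_mul_whiten (mulVec_injective_X1 hX), betaR, mulVec_mulVec]
  rfl

lemma gram_quadForm_coefCD_mulVec (z : Fin k₁ ⊕ Fin k₂ → ℝ) :
    (coefCD X *ᵥ z) ⬝ᵥ (Xᵀ * X) *ᵥ (coefCD X *ᵥ z) = z ⬝ᵥ z := by
  rw [dotProduct_mulVec, dotProduct_mulVec, ← mulVec_transpose, ← mulVec_transpose,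
    mulVec_mulVec, mulVec_mulVec, transpose_mul, transpose_transpose, ← Matrix.mul_assoc,
    Matrix.mul_assoc _ Xᵀ, transpose_coefCD_mul_gram_mul_coefCD hX, one_mulVec]

lemma rR_sub_rU (v : ℝ) (Y : Fin n → ℝ) :
    rR X v Y - rU X v Y = enorm2 (score₂ X *ᵥ Y) ^ 2 - 2 * v * k₂ := by
  have hR : betaR X Y = coefCD X *ᵥ Sum.elim (score₁ X *ᵥ Y) 0 := by
    rw [betaR_eq hX, coefCD, fromCols_mulVec_sumElim, mulVec_zero, add_zero]
  have hU : betaU X Y = coefCD X *ᵥ Sum.elim (score₁ X *ᵥ Y) (score₂ X *ᵥ Y) := by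
    rw [betaU_eq hX, coefCD, fromCols_mulVec_sumElim]
  rw [rR, rU, hR, hU, gram_quadForm_coefCD_mulVec hX, gram_quadForm_coefCD_mulVec hX, enorm2_sq,
    sumElim_dotProduct_sumElim, sumElim_dotProduct_sumElim, dotProduct_zero]
  ring

lemma score₂_mulVec_mulVec (β : Fin k₁ ⊕ Fin k₂ → ℝ) :
    score₂ X *ᵥ (X *ᵥ β) = msqrt (partialGram X) *ᵥ (β ∘ Sum.inr) := by
  have hblocks : score₂ X * X = fromCols 0 (msqrt (partialGram X)) := by
    nth_rw 2 [← fromCols_X1_X2 X]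
    rw [mul_fromCols, score₂_mul_X1 hX, score₂_mul_X2 hX]
  rw [mulVec_mulVec, hblocks, fromCols_mulVec, zero_mulVec, zero_add]

lemma coefD_mulVec_msqrt_mulVec (b : Fin k₂ → ℝ) :
    coefD X *ᵥ (msqrt (partialGram X) *ᵥ b) = -(coefB X *ᵥ b) := by
  have hdet : IsUnit (msqrt (partialGram X)).det := by
    rw [partialGram_eq hX]
    exact isUnit_det_msqrt_transpose_mul_self (mulVec_injective_lsResidual_X1_X2 hX)
  rw [mulVec_mulVec, coefD, coefB, ← neg_mulVec, fromRows_mul, fromRows_neg, Matrix.neg_mul,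
    nonsing_inv_mul_cancel_right _ _ hdet, nonsing_inv_mul _ hdet, neg_neg]

lemma betaU_mulVec (β : Fin k₁ ⊕ Fin k₂ → ℝ) : betaU X (X *ᵥ β) = β := by
  rw [betaU, mulVec_mulVec, mulVec_mulVec, Matrix.mul_assoc,
    nonsing_inv_mul _ (isUnit_det_transpose_mul_self hX), one_mulVec]

lemma betaR_mulVec_sub (β : Fin k₁ ⊕ Fin k₂ → ℝ) :
    betaR X (X *ᵥ β) - β = coefB X *ᵥ (β ∘ Sum.inr) := by
  have hU := betaU_mulVec hX β
  rw [betaU_eq hX, ← betaR_eq hX, score₂_mulVec_mulVec hX, coefD_mulVec_msqrt_mulVec hX] at hU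
  nth_rw 2 [← hU]
  abel

end Scores

section ModelAveraging

/-- The weight that the averaging estimator puts on the unrestricted model, as a function of the
score `z` of the `k` additional regressors. -/
def avgWeight (α v : ℝ) {k : ℕ} (z : Fin k → ℝ) : ℝ :=
  (1 + Real.exp (2 * α * k) * Real.exp (-α * enorm2 z ^ 2 / v))⁻¹

lemma continuous_avgWeight (α v : ℝ) {k : ℕ} :
    Continuous (avgWeight α v : (Fin k → ℝ) → ℝ) := by
  have := continuous_enorm2 (ι := Fin k)
  exact Continuous.inv₀ (by fun_prop) fun z => by positivity

lemma one_sub_lamHat (α v : ℝ) (X : Matrix (Fin n) (Fin k₁ ⊕ Fin k₂) ℝ) (Y : Fin n → ℝ) :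
    1 - lamHat α v X Y = (1 + Real.exp (-α * (rR X v Y - rU X v Y) / v))⁻¹ := by
  have hexp : Real.exp (-(α * rR X v Y) / v) =
      Real.exp (-α * (rR X v Y - rU X v Y) / v) * Real.exp (-(α * rU X v Y) / v) := by
    rw [← Real.exp_add]
    ring_nf
  rw [lamHat, hexp]
  field_simp
  ring

variable {X : Matrix (Fin n) (Fin k₁ ⊕ Fin k₂) ℝ} (hX : Function.Injective X.mulVec) {v : ℝ}
  (α : ℝ)
include hX

lemma one_sub_lamHat_eq_avgWeight (hv : v ≠ 0) (Y : Fin n → ℝ) :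
    1 - lamHat α v X Y = avgWeight α v (score₂ X *ᵥ Y) := by
  rw [one_sub_lamHat, rR_sub_rU hX, avgWeight, ← Real.exp_add]
  congr 3
  field_simp
  ring

lemma mavg_eq (hv : v ≠ 0) (Y : Fin n → ℝ) :
    mavg α v X Y = coefC X *ᵥ (score₁ X *ᵥ Y) +
      avgWeight α v (score₂ X *ᵥ Y) • coefD X *ᵥ (score₂ X *ᵥ Y) := by
  rw [mavg, ← one_sub_lamHat_eq_avgWeight hX α hv, betaR_eq hX, betaU_eq hX]
  module

lemma continuous_mavg (hv : v ≠ 0) : Continuous (mavg α v X) := by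
  have := continuous_avgWeight α v (k := k₂)
  simp_rw [funext (mavg_eq hX α hv)]
  fun_prop

lemma mavg_sub (hv : v ≠ 0) (β : Fin k₁ ⊕ Fin k₂ → ℝ) (u : Fin n → ℝ) :
    mavg α v X (X *ᵥ β + u) - β =
      coefB X *ᵥ (β ∘ Sum.inr) + coefC X *ᵥ (score₁ X *ᵥ u) +
        avgWeight α v (score₂ X *ᵥ u + msqrt (partialGram X) *ᵥ (β ∘ Sum.inr)) •
          (coefD X *ᵥ (score₂ X *ᵥ u) - coefB X *ᵥ (β ∘ Sum.inr)) := by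
  have hC : coefC X *ᵥ (score₁ X *ᵥ (X *ᵥ β)) = β + coefB X *ᵥ (β ∘ Sum.inr) := by
    rw [← betaR_eq hX, eq_add_of_sub_eq (betaR_mulVec_sub hX β), add_comm]
  rw [mavg_eq hX α hv, mulVec_add, mulVec_add, mulVec_add, mulVec_add, hC, score₂_mulVec_mulVec hX,
    coefD_mulVec_msqrt_mulVec hX, add_comm (msqrt _ *ᵥ _)]
  module

end ModelAveraging

theorem statement1_general {X : Matrix (Fin n) (Fin k₁ ⊕ Fin k₂) ℝ} (hX : X.rank = k₁ + k₂)
    (β : Fin k₁ ⊕ Fin k₂ → ℝ) {v : ℝ} (hv : 0 < v) (α : ℝ) :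
    (Pmeas X β v).map (fun Y => Real.sqrt n • (mavg α v X Y - β)) =
      ((gaussPi (Fin k₁) v).prod (gaussPi (Fin k₂) v)).map fun Z =>
        coefB X *ᵥ (Real.sqrt n • (β ∘ Sum.inr)) + coefC X *ᵥ (Real.sqrt n • Z.1) +
          avgWeight α v (Z.2 + msqrt (partialGram X) *ᵥ (β ∘ Sum.inr)) •
            (coefD X *ᵥ (Real.sqrt n • Z.2) - coefB X *ᵥ (Real.sqrt n • (β ∘ Sum.inr))) := by
  have hinj : Function.Injective X.mulVec := mulVec_injective_of_rank_eq_card (by simpa using hX)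
  have hmavg := continuous_mavg hinj α hv.ne'
  have hweight := continuous_avgWeight α v (k := k₂)
  rw [Pmeas, ← map_mulVec_pair_gaussPi hv (score_mul_transpose_score hinj),
    Measure.map_map (Continuous.measurable (by fun_prop)) (Continuous.measurable (by fun_prop)),
    Measure.map_map (Continuous.measurable (by fun_prop)) (Continuous.measurable (by fun_prop))]
  congr 1
  funext u
  simp only [Function.comp_apply, mavg_sub hinj α hv.ne', mulVec_smul]
  module

/-- the distribution of `√n(β̃ − β)` under `P_{n,β,σ}` equals the distribution of
`B_n√n β₂ + C_n√n Z₁ + [1 + exp(2αk₂) exp(−α‖Z₂ + (X₂'(I−P_R)X₂)^{1/2}β₂‖²/σ²)]⁻¹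
  · (D_n√n Z₂ − B_n√n β₂)` with `Z₁ ~ N(0, σ²I_{k₁})`, `Z₂ ~ N(0, σ²I_{k₂})` independent. -/
theorem statement1 {n k₁ k₂ : ℕ} (hk₁ : 0 < k₁) (hk₂ : 0 < k₂) (hn : k₁ + k₂ ≤ n)
    (X : Matrix (Fin n) (Fin k₁ ⊕ Fin k₂) ℝ) (hX : X.rank = k₁ + k₂)
    (β : (Fin k₁ ⊕ Fin k₂) → ℝ) (σ α : ℝ) (hσ : 0 < σ) (hα : 0 < α) :
    (Pmeas X β (σ ^ 2)).map (fun Y => Real.sqrt n • (mavg α (σ ^ 2) X Y - β)) =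
      (((gaussPi (Fin k₁) (σ ^ 2)).prod (gaussPi (Fin k₂) (σ ^ 2))).map
        (fun Z : (Fin k₁ → ℝ) × (Fin k₂ → ℝ) =>
          (fromRows (((X1 X)ᵀ * X1 X)⁻¹ * (X1 X)ᵀ * X2 X) (-1)).mulVec
              (Real.sqrt n • (β ∘ Sum.inr)) +
          (fromRows (msqrt ((X1 X)ᵀ * X1 X))⁻¹ 0).mulVec (Real.sqrt n • Z.1) +
          (1 + Real.exp (2 * α * k₂) *
              Real.exp (-α * (enorm2 (Z.2 +
                (msqrt ((X2 X)ᵀ * (1 - projR X) * X2 X)).mulVec (β ∘ Sum.inr))) ^ 2 /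
                σ ^ 2))⁻¹ •
            ((fromRows (-(((X1 X)ᵀ * X1 X)⁻¹ * (X1 X)ᵀ * X2 X *
                  (msqrt ((X2 X)ᵀ * (1 - projR X) * X2 X))⁻¹))
                ((msqrt ((X2 X)ᵀ * (1 - projR X) * X2 X))⁻¹)).mulVec (Real.sqrt n • Z.2) -
              (fromRows (((X1 X)ᵀ * X1 X)⁻¹ * (X1 X)ᵀ * X2 X) (-1)).mulVec
                (Real.sqrt n • (β ∘ Sum.inr))))) := by
  exact statement1_general hX β (by positivity) α

end
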